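/- Let d be a positive integer, let ρ be a positive definite Hermitian d×d complex matrix, and let {E_i}_{i∈I} be a finite family of nonzero positive semidefinite Hermitian d×d matrices with Σ_i E_i = 𝟙. If a Hermitian matrix A satisfies Σ_i (Re Tr[ρE_iA])² / Tr[ρE_i] = Re Tr[ρA²] (i.e., the bound ⟨A,F(A)⟩_ρ ≤ ⟨A,A⟩_ρ is saturated), then for every i ∈ I there exists a real number γ_i such that E_i A = γ_i E_i. -/

import Mathlib

open Matrix
open scoped ComplexOrder

lemma aux_nonneg {d : ℕ} (ρ B : Matrix (Fin d) (Fin d) ℂ) (hρ : ρ.PosDef) :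
    0 ≤ ((ρ * (Bᴴ * B)).trace).re ∧ (((ρ * (Bᴴ * B)).trace).re = 0 → B = 0) := by
  have h1 : (B * ρ * Bᴴ).PosSemidef := hρ.posSemidef.mul_mul_conjTranspose_same B
  have h2 : (ρ * (Bᴴ * B)).trace = (B * ρ * Bᴴ).trace := by
    rw [← Matrix.mul_assoc, Matrix.trace_mul_comm, Matrix.mul_assoc]
  have h3 := h1.trace_nonneg
  rw [h2]
  obtain ⟨h4, h5⟩ := Complex.le_def.1 h3
  refine ⟨by simpa using h4, fun h => ?_⟩
  have h6 : (B * ρ * Bᴴ).trace = 0 := Complex.ext h (by simpa using h5.symm)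
  have h7 := h1.trace_eq_zero_iff.1 h6
  have h8 : Bᴴ = 0 := by
    ext i j
    by_contra hne
    have hv : (fun k => Bᴴ k j) ≠ 0 := fun hz => hne (congrFun hz i)
    have hp := hρ.dotProduct_mulVec_pos hv
    have : star (fun k => Bᴴ k j) ⬝ᵥ (ρ *ᵥ (fun k => Bᴴ k j)) = (B * ρ * Bᴴ) j j := by
      rw [Matrix.mul_assoc]
      simp [Matrix.mul_apply, dotProduct, mulVec]
    rw [this, h7] at hp
    simp at hp
  simpa using h8

/-- If the Fisher-information bound `⟨A, F(A)⟩_ρ ≤ ⟨A, A⟩_ρ` is saturated, i.e.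
`Σ_i (Re Tr[ρE_iA])² / Tr[ρE_i] = Re Tr[ρA²]`, then each effect satisfies
`E_i A = γ_i E_i` for some real scalar `γ_i`. -/
theorem stmt15 (d : ℕ) (hd : 0 < d) (ι : Type) [Fintype ι]
    (ρ : Matrix (Fin d) (Fin d) ℂ) (hρ : ρ.PosDef)
    (E : ι → Matrix (Fin d) (Fin d) ℂ)
    (hE : ∀ i, (E i).PosSemidef) (hEne : ∀ i, E i ≠ 0)
    (hsum : ∑ i, E i = 1)
    (A : Matrix (Fin d) (Fin d) ℂ) (hA : A.IsHermitian)
    (hsat : ∑ i, (((ρ * E i * A).trace).re) ^ 2 / ((ρ * E i).trace).re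
      = ((ρ * A * A).trace).re) :
    ∀ i, ∃ γ : ℝ, E i * A = γ • E i := by
  have hρh : ρᴴ = ρ := hρ.isHermitian
  have hAh : Aᴴ = A := hA
  have hD : ∀ i, ∃ D : Matrix (Fin d) (Fin d) ℂ, E i = Dᴴ * D := fun i => by
    open scoped MatrixOrder in
    obtain ⟨D, hD⟩ := CStarAlgebra.nonneg_iff_eq_star_mul_self.1 (hE i).nonneg
    exact ⟨D, hD⟩
  choose D hD using hD
  have hp : ∀ i, 0 < ((ρ * E i).trace).re := fun i => by
    obtain ⟨h1, h2⟩ := aux_nonneg ρ (D i) hρ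
    rw [← hD] at h1 h2
    refine lt_of_le_of_ne h1 fun h => hEne i ?_
    rw [hD, h2 h.symm]; simp
  let γ : ι → ℝ := fun i => ((ρ * E i * A).trace).re / ((ρ * E i).trace).re
  let X : ι → Matrix (Fin d) (Fin d) ℂ := fun i => A - γ i • (1 : Matrix (Fin d) (Fin d) ℂ)
  have hX : ∀ i, (X i)ᴴ = X i := fun i => by
    simp [X, hAh]
  have hB : ∀ i, (D i * X i)ᴴ * (D i * X i) = X i * E i * X i := fun i => by
    rw [conjTranspose_mul, hX, hD]; simp only [Matrix.mul_assoc]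
  have hcomm : ∀ i, ((ρ * A * E i).trace).re = ((ρ * E i * A).trace).re := fun i => by
    have h := Matrix.trace_conjTranspose (ρ * A * E i)
    have hEh : (E i)ᴴ = E i := (hE i).isHermitian
    rw [conjTranspose_mul, conjTranspose_mul, hEh, hAh, hρh, ← Matrix.mul_assoc,
      Matrix.trace_mul_comm, ← Matrix.mul_assoc] at h
    rw [h]; simp
  have hval : ∀ i, ((ρ * (X i * E i * X i)).trace).re = ((ρ * A * E i * A).trace).re
      - (((ρ * E i * A).trace).re) ^ 2 / ((ρ * E i).trace).re := fun i => by
    have e : ρ * (X i * E i * X i) = ρ * A * E i * A - γ i • (ρ * A * E i)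
        - γ i • (ρ * E i * A) + (γ i * γ i) • (ρ * E i) := by
      simp only [X, Matrix.sub_mul, Matrix.mul_sub, smul_mul_assoc, mul_smul_comm,
        Matrix.one_mul, Matrix.mul_one, smul_sub, smul_smul, Matrix.mul_assoc]
      abel
    rw [e]
    simp only [trace_add, trace_sub, trace_smul, Complex.add_re, Complex.sub_re,
      Complex.smul_re, smul_eq_mul, hcomm]
    have := (hp i).ne'
    simp only [γ]
    field_simp
    ring
  have htot : ∑ i, ((ρ * (X i * E i * X i)).trace).re = 0 := by
    simp only [hval, Finset.sum_sub_distrib, hsat]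
    rw [← Complex.re_sum, ← trace_sum, ← Finset.sum_mul, ← Finset.mul_sum, hsum]
    simp
  have hnn : ∀ i ∈ Finset.univ, 0 ≤ ((ρ * (X i * E i * X i)).trace).re := fun i _ => by
    rw [← hB]; exact (aux_nonneg ρ _ hρ).1
  intro i
  have h0 := (Finset.sum_eq_zero_iff_of_nonneg hnn).1 htot i (Finset.mem_univ i)
  rw [← hB] at h0
  have h1 := (aux_nonneg ρ _ hρ).2 h0
  refine ⟨γ i, ?_⟩
  have h2 : E i * X i = 0 := by rw [hD, Matrix.mul_assoc, h1, Matrix.mul_zero]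
  simp only [X, Matrix.mul_sub, mul_smul_comm, Matrix.mul_one] at h2
  exact sub_eq_zero.1 h2
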